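/- Let s ≥ 1 be an integer, let C be a type, and let τ : Fin (3s+1) × Fin (s+1) → C be a function such that τ (k, 0) ≠ τ (k, Fin.last s) for every k : Fin (3s+1). Then there exist an index i with 0 ≤ i < s and four pairwise distinct indices k₁, k₂, k₃, k₄ : Fin (3s+1) such that τ (k_t, i) ≠ τ (k_t, i+1) for each t ∈ {1, 2, 3, 4}. -/

import Mathlib

/-- A finite sequence with different endpoints changes value at some step. -/
theorem exists_castSucc_ne_succ {s : ℕ} {C : Type*} (f : Fin (s + 1) → C)
    (hf : f 0 ≠ f (Fin.last s)) : ∃ i : Fin s, f i.castSucc ≠ f i.succ := by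
  by_contra! h
  have hconst : ∀ j, f 0 = f j := fun j ↦
    Fin.induction rfl (fun i hi ↦ hi.trans (h i)) j
  exact hf (hconst _)

/-- Walk-along-the-path plus pigeonhole: if `τ` colors the grid
`Fin (3s+1) × Fin (s+1)` so that the two endpoints of each row get different
colors, then some step `i ↦ i+1` of the path witnesses a color change in at
least four distinct rows. -/
theorem pigeonhole_color_change (s : ℕ) (hs : 1 ≤ s) {C : Type*}
    (τ : Fin (3 * s + 1) × Fin (s + 1) → C)
    (hτ : ∀ k : Fin (3 * s + 1), τ (k, 0) ≠ τ (k, Fin.last s)) :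
    ∃ i : Fin s, ∃ k₁ k₂ k₃ k₄ : Fin (3 * s + 1),
      k₁ ≠ k₂ ∧ k₁ ≠ k₃ ∧ k₁ ≠ k₄ ∧ k₂ ≠ k₃ ∧ k₂ ≠ k₄ ∧ k₃ ≠ k₄ ∧
      τ (k₁, i.castSucc) ≠ τ (k₁, i.succ) ∧
      τ (k₂, i.castSucc) ≠ τ (k₂, i.succ) ∧
      τ (k₃, i.castSucc) ≠ τ (k₃, i.succ) ∧
      τ (k₄, i.castSucc) ≠ τ (k₄, i.succ) := by
  choose g hg using fun k ↦ exists_castSucc_ne_succ (fun j ↦ τ (k, j)) (hτ k)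
  obtain ⟨i, hi⟩ := Fintype.exists_lt_card_fiber_of_mul_lt_card (n := 3) g (by simp; omega)
  let e := Finset.orderEmbOfCardLe _ (Nat.succ_le_of_lt hi)
  have hne : ∀ a b, a ≠ b → e a ≠ e b := fun a b hab ↦ e.injective.ne hab
  have hchange : ∀ a, τ (e a, i.castSucc) ≠ τ (e a, i.succ) := fun a ↦ by
    have hmem : g (e a) = i := by
      simpa using Finset.orderEmbOfCardLe_mem _ (Nat.succ_le_of_lt hi) a
    simpa only [hmem] using hg (e a)
  exact ⟨i, e 0, e 1, e 2, e 3, hne _ _ (by decide), hne _ _ (by decide),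
    hne _ _ (by decide), hne _ _ (by decide), hne _ _ (by decide), hne _ _ (by decide),
    hchange 0, hchange 1, hchange 2, hchange 3⟩
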